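/- (Ore–Sato theorem, existence form.) Let b : ℤ^r → k(X_1,…,X_r)^× be a 1-cocycle, i.e. b(m + m') = τ_m(b(m')) · b(m) for all m, m' ∈ ℤ^r. Then there exist: a group homomorphism c : ℤ^r → k^×; an element F ∈ k(X_1,…,X_r)^×; an integer l ≥ 0; irreducible univariate polynomials h_1,…,h_l ∈ k[t]; nonzero vectors μ_1,…,μ_l ∈ ℤ^r, each with greatest common divisor of its nonzero entries equal to 1 (write μ_i(m) = Σ_a μ_{i,a} m_a and μ_i(X) = Σ_a μ_{i,a} X_a); and finitely supported functions z_i : ℤ → ℤ, such that for all m ∈ ℤ^r: b(m) = c(m) · τ_m(F)·F^{−1} · Π_{i=1}^{l} Π_{j ∈ ℤ} P_i(j,m)^{z_i(j)}, where P_i(j,m) = Π_{ν=0}^{μ_i(m)−1} h_i(μ_i(X) + j + ν) if μ_i(m) ≥ 1, P_i(j,m) = 1 if μ_i(m) = 0, and P_i(j,m) = Π_{ν=μ_i(m)}^{−1} h_i(μ_i(X) + j + ν)^{−1} if μ_i(m) ≤ −1. -/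

import Mathlib

open MvPolynomial

noncomputable section

/-- The rational function field `k(X₁,…,X_r)`. -/
abbrev RatFuncField (k : Type*) [Field k] (r : ℕ) : Type _ :=
  FractionRing (MvPolynomial (Fin r) k)

/-- Translation of a polynomial: `(τ_m f)(X) = f(X₁ + m₁, …, X_r + m_r)`. -/
def polyTranslate (k : Type*) [Field k] {r : ℕ} (m : Fin r → ℤ) :
    MvPolynomial (Fin r) k →ₐ[k] MvPolynomial (Fin r) k :=
  aeval fun i => X i + C ((m i : ℤ) : k)

/-- The canonical map from polynomials into the rational function field. -/
def toRat (k : Type*) [Field k] (r : ℕ) (p : MvPolynomial (Fin r) k) : RatFuncField k r :=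
  algebraMap (MvPolynomial (Fin r) k) (RatFuncField k r) p

/-- The integer linear form `μ(X) = n₁X₁ + ⋯ + n_rX_r` as a polynomial. -/
def linForm (k : Type*) [Field k] {r : ℕ} (n : Fin r → ℤ) : MvPolynomial (Fin r) k :=
  ∑ i, C ((n i : ℤ) : k) * X i

/-- `h(μ(X) + c)`: substitution of the shifted linear form in a univariate polynomial. -/
def hShift (k : Type*) [Field k] {r : ℕ} (h : Polynomial k) (n : Fin r → ℤ) (c : ℤ) :
    MvPolynomial (Fin r) k :=
  Polynomial.aeval (linForm k n + C ((c : ℤ) : k)) h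

/-- The hypergeometric factor
`P(j,m) = Π_{ν=0}^{μ(m)−1} h(μ(X)+j+ν)` (resp. `1`, resp.
`Π_{ν=μ(m)}^{−1} h(μ(X)+j+ν)⁻¹`) according to the sign of `μ(m) = Σ nₐmₐ`. -/
def hgFactor (k : Type*) [Field k] {r : ℕ} (h : Polynomial k) (n : Fin r → ℤ)
    (j : ℤ) (m : Fin r → ℤ) : RatFuncField k r :=
  if 1 ≤ ∑ a, n a * m a then
    toRat k r (∏ ν ∈ Finset.range (∑ a, n a * m a).toNat, hShift k h n (j + ν))
  else if (∑ a, n a * m a) = 0 then 1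
  else (toRat k r (∏ ν ∈ Finset.range (-(∑ a, n a * m a)).toNat,
        hShift k h n ((∑ a, n a * m a) + j + ν)))⁻¹


section Abstract
variable {G S : Type*} [AddCommGroup G] [AddAction G S]

/-- additive cocycle with values in the permutation module -/
def IsCoc (β : G → S →₀ ℤ) : Prop :=
  ∀ m m', β (m + m') = Finsupp.mapDomain (fun s => m +ᵥ s) (β m') + β m

theorem mapDomain_vadd (m : G) (f : S →₀ ℤ) (s : S) :
    Finsupp.mapDomain (fun s => m +ᵥ s) f s = f (-m +ᵥ s) := by
  conv_lhs => rw [show s = m +ᵥ (-m +ᵥ s) by rw [vadd_vadd]; simp]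
  exact Finsupp.mapDomain_apply (f := fun s : S => m +ᵥ s) (AddAction.injective m) f (-m +ᵥ s)

theorem IsCoc.apply {β : G → S →₀ ℤ} (h : IsCoc β) (m m' : G) (s : S) :
    β (m + m') s = β m' (-m +ᵥ s) + β m s := by
  rw [h m m', Finsupp.add_apply, mapDomain_vadd]

theorem line_inj {s0 : S} (htf : ∀ (m : G) (N : ℤ), N ≠ 0 → (N • m) +ᵥ s0 = s0 → m +ᵥ s0 = s0)
    {g : G} (hg : g +ᵥ s0 ≠ s0) (x : G) :
    Function.Injective (fun n : ℤ => (x + n • g) +ᵥ s0) := by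
  intro a b hab
  by_contra hne
  apply hg
  apply htf g (a - b) (sub_ne_zero.2 hne)
  have : (x + b • g) +ᵥ ((a - b) • g +ᵥ s0) = (x + b • g) +ᵥ s0 := by
    refine Eq.trans ?_ hab
    simp only [vadd_vadd]
    congr 1
    rw [sub_smul]; abel
  exact AddAction.injective _ this

theorem coc_stab {β : G → S →₀ ℤ} (h : IsCoc β) {s0 : S}
    (hsup : ∀ m s, s ∉ AddAction.orbit G s0 → β m s = 0)
    (htf : ∀ (m : G) (N : ℤ), N ≠ 0 → (N • m) +ᵥ s0 = s0 → m +ᵥ s0 = s0)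
    {g0 : G} (hg0 : g0 +ᵥ s0 ≠ s0) {t : G} (ht : t +ᵥ s0 = s0) : β t = 0 := by
  have ht' : -t +ᵥ s0 = s0 := by
    conv_lhs => rw [← ht]
    simp
  have key : ∀ g : G, β t (g +ᵥ s0) = β t s0 := by
    intro g
    have h1 := h.apply g t (g +ᵥ s0)
    have h2 := h.apply t g (g +ᵥ s0)
    rw [add_comm t g, h1] at h2
    have e : -t +ᵥ (g +ᵥ s0) = g +ᵥ s0 := by
      rw [vadd_vadd, add_comm, ← vadd_vadd, ht']
    rw [e, neg_vadd_vadd] at h2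
    linarith
  have hz : β t s0 = 0 := by
    by_contra hne
    have hinj := line_inj htf hg0 0
    apply Set.infinite_range_of_injective hinj
    refine (β t).support.finite_toSet.subset ?_
    rintro _ ⟨n, rfl⟩
    simp only [Finset.mem_coe, Finsupp.mem_support_iff]
    rw [key]; exact hne
  ext s
  by_cases hs : s ∈ AddAction.orbit G s0
  · obtain ⟨g, rfl⟩ := hs
    simpa [hz] using key g
  · simpa using hsup t s hs

theorem coc_rank_two {β : G → S →₀ ℤ} (h : IsCoc β) {s0 : S}
    (hsup : ∀ m s, s ∉ AddAction.orbit G s0 → β m s = 0)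
    (htf : ∀ (m : G) (N : ℤ), N ≠ 0 → (N • m) +ᵥ s0 = s0 → m +ᵥ s0 = s0)
    (g₁ g₂ : G) (hind : ∀ a b : ℤ, (a • g₁ + b • g₂) +ᵥ s0 = s0 → a = 0 ∧ b = 0) :
    ∃ f : S →₀ ℤ, ∀ m, β m = Finsupp.mapDomain (fun s => m +ᵥ s) f - f := by
  classical
  have hg₁ : g₁ +ᵥ s0 ≠ s0 := by
    intro hh
    have := hind 1 0 (by simpa using hh)
    simp at this
  have hstab : ∀ t : G, t +ᵥ s0 = s0 → β t = 0 := fun t ht => coc_stab h hsup htf hg₁ ht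
  let ψ : G → ℤ := fun g => β (-g) s0
  have hψ : ∀ m g : G, β m (g +ᵥ s0) = ψ (g - m) - ψ g := by
    intro m g
    have := h.apply (-g) m s0
    simp only [ψ]
    rw [show -(g - m) = -g + m by abel, this, neg_neg]
    ring
  have hψs : ∀ g g' : G, g +ᵥ s0 = g' +ᵥ s0 → ψ g = ψ g' := by
    intro g g' hgg
    have h1 : β (g - g') = 0 := by
      apply hstab
      rw [sub_eq_add_neg, add_comm, ← vadd_vadd, hgg, neg_vadd_vadd]
    have h2 := h.apply (-g) (g - g') s0
    simp only [ψ]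
    rw [show -g' = -g + (g - g') by abel, h2, h1]
    simp
  -- a line missing the support of `β g₁`
  obtain ⟨N, hN⟩ : ∃ N : ℤ, ∀ n : ℤ, β g₁ ((N • g₂ + n • g₁) +ᵥ s0) = 0 := by
    by_contra hcon
    push Not at hcon
    choose n hn using hcon
    have hinj : Function.Injective (fun N : ℤ => (N • g₂ + n N • g₁) +ᵥ s0) := by
      intro a b hab
      have : ((n a - n b) • g₁ + (a - b) • g₂) +ᵥ s0 = s0 := by
        have e : (b • g₂ + n b • g₁) +ᵥ (((n a - n b) • g₁ + (a - b) • g₂) +ᵥ s0) =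
            (b • g₂ + n b • g₁) +ᵥ s0 := by
          refine Eq.trans ?_ hab
          simp only [vadd_vadd]
          congr 1
          simp only [sub_smul]; abel
        exact AddAction.injective _ e
      have := (hind _ _ this).2
      linarith
    apply Set.infinite_range_of_injective hinj
    refine (β g₁).support.finite_toSet.subset ?_
    rintro _ ⟨N, rfl⟩
    simpa using hn N
  let L := ψ (N • g₂)
  have hline : ∀ n : ℤ, ψ (N • g₂ + n • g₁) = L := by
    intro n
    induction n using Int.induction_on with
    | zero => simp [L]
    | succ i ih =>
      have h1 := hN (i + 1)
      rw [hψ, show N • g₂ + ((i : ℤ) + 1) • g₁ - g₁ = N • g₂ + (i : ℤ) • g₁ by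
        rw [add_smul]; simp; abel] at h1
      linarith
    | pred i ih =>
      have h1 := hN (-i)
      rw [hψ, show N • g₂ + (-(i : ℤ)) • g₁ - g₁ = N • g₂ + (-(i : ℤ) - 1) • g₁ by
        rw [sub_smul]; simp; abel] at h1
      linarith
  have hcof : ∀ x : G, {n : ℤ | ψ (x + n • g₁) ≠ L}.Finite := by
    intro x
    have hinj := line_inj htf hg₁ (N • g₂)
    refine ((β (N • g₂ - x)).support.finite_toSet.preimage hinj.injOn).subset ?_
    intro n hn
    simp only [Set.mem_preimage, Finset.mem_coe, Finsupp.mem_support_iff]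
    rw [hψ, hline, show N • g₂ + n • g₁ - (N • g₂ - x) = x + n • g₁ by abel]
    exact sub_ne_zero.2 hn
  have hfin : {s : S | ∃ x, x +ᵥ s0 = s ∧ ψ x ≠ L}.Finite := by
    have : {s : S | ∃ x, x +ᵥ s0 = s ∧ ψ x ≠ L} ⊆
        ⋃ s ∈ (β g₁).support, {s' | ∃ y, y +ᵥ s0 = s ∧ ∃ n : ℤ, (y + n • g₁) +ᵥ s0 = s' ∧
          ψ (y + n • g₁) ≠ L} := by
      rintro s ⟨x, rfl, hx⟩
      have : ∃ n : ℕ, ψ (x + (n : ℤ) • g₁) ≠ ψ (x + ((n : ℤ) + 1) • g₁) := by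
        by_contra hcon
        push Not at hcon
        have hall : ∀ n : ℕ, ψ (x + (n : ℤ) • g₁) = ψ x := by
          intro n
          induction n with
          | zero => simp
          | succ n ih => rw [← ih, hcon n]; push_cast; rfl
        apply Set.infinite_range_of_injective (Nat.cast_injective (R := ℤ))
        refine (hcof x).subset ?_
        rintro _ ⟨n, rfl⟩
        simp only [Set.mem_ofPred_eq, hall]
        exact hx
      obtain ⟨n, hn⟩ := this
      simp only [Set.mem_iUnion, Set.mem_ofPred_eq]
      refine ⟨(x + ((n : ℤ) + 1) • g₁) +ᵥ s0, ?_, x + ((n : ℤ) + 1) • g₁, rfl,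
        -((n : ℤ) + 1), ?_, ?_⟩
      · rw [Finsupp.mem_support_iff, hψ, show x + ((n : ℤ) + 1) • g₁ - g₁ = x + (n : ℤ) • g₁ by
          rw [add_smul]; simp; abel]
        exact sub_ne_zero.2 hn
      · rw [neg_smul]; simp
      · rw [neg_smul]; simpa using hx
    refine Set.Finite.subset ?_ this
    refine Set.Finite.biUnion (Finset.finite_toSet _) ?_
    intro s _
    by_cases hs : ∃ y : G, y +ᵥ s0 = s
    · obtain ⟨y, rfl⟩ := hs
      refine ((hcof y).image (fun n : ℤ => (y + n • g₁) +ᵥ s0)).subset ?_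
      rintro s' ⟨y', hy', n, rfl, hn⟩
      have e : (y + n • g₁) +ᵥ s0 = (y' + n • g₁) +ᵥ s0 := by
        rw [add_comm, ← vadd_vadd, ← hy', vadd_vadd, add_comm]
      refine ⟨n, ?_, e⟩
      simp only [Set.mem_ofPred_eq]
      rw [hψs _ _ e]; exact hn
    · convert Set.finite_empty
      ext s'
      simp only [Set.mem_ofPred_eq, Set.mem_empty_iff_false, iff_false]
      rintro ⟨y, hy, -⟩
      exact hs ⟨y, hy⟩
  let f0 : S → ℤ := fun s => if hs : ∃ g : G, g +ᵥ s0 = s then ψ hs.choose - L else 0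
  have hf0 : ∀ g : G, f0 (g +ᵥ s0) = ψ g - L := by
    intro g
    have hs : ∃ g' : G, g' +ᵥ s0 = g +ᵥ s0 := ⟨g, rfl⟩
    simp only [f0]
    rw [dif_pos hs, hψs _ _ hs.choose_spec]
  have hf0' : ∀ s, s ∉ AddAction.orbit G s0 → f0 s = 0 := by
    intro s hs
    simp only [f0]
    rw [dif_neg]
    exact hs
  have hf0fin : (Function.support f0).Finite := by
    refine hfin.subset ?_
    intro s hs
    by_cases ho : s ∈ AddAction.orbit G s0
    · obtain ⟨g, rfl⟩ := ho
      refine ⟨g, rfl, ?_⟩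
      have : f0 (g +ᵥ s0) ≠ 0 := hs
      rw [hf0] at this
      exact sub_ne_zero.1 this
    · exact absurd (hf0' s ho) hs
  refine ⟨Finsupp.ofSupportFinite f0 hf0fin, ?_⟩
  intro m
  ext s
  rw [Finsupp.sub_apply, mapDomain_vadd]
  simp only [Finsupp.ofSupportFinite_coe]
  by_cases ho : s ∈ AddAction.orbit G s0
  · obtain ⟨g, rfl⟩ := ho
    simp only
    rw [hψ, vadd_vadd, hf0, hf0, show -m + g = g - m by abel]
    ring
  · rw [hsup m s ho, hf0' s ho, hf0', sub_zero]
    intro hc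
    apply ho
    obtain ⟨g, hg⟩ := hc
    refine ⟨m + g, ?_⟩
    simp only at hg ⊢
    rw [← vadd_vadd, hg, vadd_neg_vadd]

theorem rank_cases_aux (s0 : S) {g0 : G} (hg0 : g0 +ᵥ s0 ≠ s0) (H' : Submodule ℤ G)
    (hmem : ∀ g : G, H'.mkQ g = 0 ↔ g +ᵥ s0 = s0) (d : ℕ) (bs : Module.Basis (Fin d) ℤ (G ⧸ H')) :
    (∃ g₁ g₂ : G, ∀ a b : ℤ, (a • g₁ + b • g₂) +ᵥ s0 = s0 → a = 0 ∧ b = 0) ∨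
    (∃ μ : G →+ ℤ, Function.Surjective μ ∧ ∀ g, g +ᵥ s0 = s0 ↔ μ g = 0) := by
  match d, bs with
  | 0, bs =>
    exfalso
    apply hg0
    rw [← hmem]
    have := bs.repr.toEquiv.subsingleton
    exact Subsingleton.elim _ _
  | 1, bs =>
    right
    refine ⟨((bs.coord 0).comp H'.mkQ).toAddMonoidHom, ?_, ?_⟩
    · intro z
      obtain ⟨g, hg⟩ := H'.mkQ_surjective (z • bs 0)
      refine ⟨g, ?_⟩
      simp [hg]
    · intro g
      rw [← hmem]
      constructor
      · intro h; simp [h]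
      · intro h
        apply bs.ext_elem
        intro i
        have : i = 0 := Subsingleton.elim _ _
        subst this
        simpa using h
  | (d+2), bs =>
    left
    obtain ⟨g₁, h1⟩ := H'.mkQ_surjective (bs 0)
    obtain ⟨g₂, h2⟩ := H'.mkQ_surjective (bs 1)
    refine ⟨g₁, g₂, ?_⟩
    intro a b hab
    rw [← hmem, map_add, map_smul, map_smul, h1, h2] at hab
    constructor
    · have := congrArg (fun q => bs.repr q 0) hab
      simpa using this
    · have := congrArg (fun q => bs.repr q 1) hab
      simpa using this
/-- Rank dichotomy. -/
theorem rank_cases [Module.Finite ℤ G] {s0 : S}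
    (htf : ∀ (m : G) (N : ℤ), N ≠ 0 → (N • m) +ᵥ s0 = s0 → m +ᵥ s0 = s0)
    {g0 : G} (hg0 : g0 +ᵥ s0 ≠ s0) :
    (∃ g₁ g₂ : G, ∀ a b : ℤ, (a • g₁ + b • g₂) +ᵥ s0 = s0 → a = 0 ∧ b = 0) ∨
    (∃ μ : G →+ ℤ, Function.Surjective μ ∧ ∀ g, g +ᵥ s0 = s0 ↔ μ g = 0) := by
  let H : AddSubgroup G := AddAction.stabilizer G s0
  let H' : Submodule ℤ G := AddSubgroup.toIntSubmodule H
  have hmem : ∀ g : G, H'.mkQ g = 0 ↔ g +ᵥ s0 = s0 := by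
    intro g
    rw [Submodule.mkQ_apply, Submodule.Quotient.mk_eq_zero]
    exact AddAction.mem_stabilizer_iff
  have htf' : Module.IsTorsionFree ℤ (G ⧸ H') := by
    rw [Module.isTorsionFree_iff_smul_eq_zero]
    intro N q hq
    obtain ⟨g, rfl⟩ := H'.mkQ_surjective q
    by_cases hN : N = 0
    · exact Or.inl hN
    · right
      rw [hmem]
      apply htf g N hN
      rw [← hmem, map_smul, hq]
  have : Module.Free ℤ (G ⧸ H') := inferInstance
  have key : ∀ d : ℕ, Module.Basis (Fin d) ℤ (G ⧸ H') → ((∃ g₁ g₂ : G, ∀ a b : ℤ,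
      (a • g₁ + b • g₂) +ᵥ s0 = s0 → a = 0 ∧ b = 0) ∨
      (∃ μ : G →+ ℤ, Function.Surjective μ ∧ ∀ g, g +ᵥ s0 = s0 ↔ μ g = 0)) := by
    intro d bs
    exact rank_cases_aux s0 hg0 H' hmem d bs
  exact key _ (Module.finBasis ℤ (G ⧸ H'))

/-- The set where two cocycles agree. -/
def agreeSub {β γ : G → S →₀ ℤ} (hβ : IsCoc β) (hγ : IsCoc γ) : AddSubgroup G where
  carrier := {g | β g = γ g}
  zero_mem' := by
    have h1 := hβ 0 0
    have h2 := hγ 0 0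
    simp only [add_zero, zero_vadd] at h1 h2
    have e : (fun s : S => s) = id := rfl
    rw [e, Finsupp.mapDomain_id] at h1 h2
    have h1' : β 0 = 0 := by simpa using h1
    have h2' : γ 0 = 0 := by simpa using h2
    simp [h1', h2']
  add_mem' := by
    intro a b ha hb
    simp only [Set.mem_ofPred_eq] at *
    rw [hβ, hγ, ha, hb]
  neg_mem' := by
    intro a ha
    simp only [Set.mem_ofPred_eq] at *
    have h1 := hβ a (-a)
    have h2 := hγ a (-a)
    have h0 : β 0 = γ 0 := by
      have h1 := hβ 0 0
      have h2 := hγ 0 0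
      simp only [add_zero, zero_vadd] at h1 h2
      have e : (fun s : S => s) = id := rfl
      rw [e, Finsupp.mapDomain_id] at h1 h2
      have h1' : β 0 = 0 := by simpa using h1
      have h2' : γ 0 = 0 := by simpa using h2
      simp [h1', h2']
    rw [add_neg_cancel] at h1 h2
    rw [h0, h2, ha] at h1
    have h3 := add_right_cancel h1
    exact (Finsupp.mapDomain_injective (AddAction.injective a) h3).symm

theorem coc_eq_of {β γ : G → S →₀ ℤ} (hβ : IsCoc β) (hγ : IsCoc γ) (μ : G →+ ℤ) (m0 : G)
    (hm0 : μ m0 = 1) (h0 : β m0 = γ m0) (hk : ∀ g, μ g = 0 → β g = γ g) (g : G) :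
    β g = γ g := by
  have h1 : m0 ∈ agreeSub hβ hγ := h0
  have h2 : g - μ g • m0 ∈ agreeSub hβ hγ := hk _ (by simp [hm0])
  have h3 := (agreeSub hβ hγ).add_mem h2 ((agreeSub hβ hγ).zsmul_mem h1 (μ g))
  rw [sub_add_cancel] at h3
  exact h3
end Abstract

section Poly
variable {k : Type*} [Field k] {r : ℕ}

theorem T_C (m : Fin r → ℤ) (a : k) : polyTranslate k m (C a) = C a := by
  simp [polyTranslate]

theorem T_X (m : Fin r → ℤ) (i : Fin r) : polyTranslate k m (X i) = X i + C (m i : k) := by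
  simp [polyTranslate]

theorem eval_T (m : Fin r → ℤ) (p : MvPolynomial (Fin r) k) (x : Fin r → k) :
    eval x (polyTranslate k m p) = eval (fun i => x i + (m i : k)) p := by
  induction p using MvPolynomial.induction_on with
  | C a => simp
  | add p q hp hq => simp [hp, hq]
  | mul_X p i hp => simp [hp, T_X]

theorem T_T (m m' : Fin r → ℤ) (p : MvPolynomial (Fin r) k) :
    polyTranslate k m (polyTranslate k m' p) = polyTranslate k (m + m') p := by
  induction p using MvPolynomial.induction_on with
  | C a => simp
  | add p q hp hq => simp [hp, hq]
  | mul_X p i hp => simp [hp, T_X, add_assoc, add_comm (m i : MvPolynomial (Fin r) k)]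

theorem T_zero (p : MvPolynomial (Fin r) k) : polyTranslate k 0 p = p := by
  induction p using MvPolynomial.induction_on with
  | C a => simp
  | add p q hp hq => simp [hp, hq]
  | mul_X p i hp => simp [hp, T_X]

/-- Translation as an equivalence. -/
def TEquiv (k : Type*) [Field k] {r : ℕ} (m : Fin r → ℤ) :
    MvPolynomial (Fin r) k ≃ₐ[k] MvPolynomial (Fin r) k :=
  AlgEquiv.ofAlgHom (polyTranslate k m) (polyTranslate k (-m))
    (by ext i; simp [T_T, T_zero]) (by ext i; simp [T_T, T_zero])

theorem T_irr (m : Fin r → ℤ) {p : MvPolynomial (Fin r) k} (hp : Irreducible p) :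
    Irreducible (polyTranslate k m p) :=
  (MulEquiv.irreducible_iff (TEquiv k m)).2 hp

theorem T_assoc (m : Fin r → ℤ) {p q : MvPolynomial (Fin r) k} (h : Associated p q) :
    Associated (polyTranslate k m p) (polyTranslate k m q) :=
  Associated.map (polyTranslate k m) h

theorem ext_int [CharZero k] {p q : MvPolynomial (Fin r) k}
    (h : ∀ x : Fin r → ℤ, eval (fun i => (x i : k)) p = eval (fun i => (x i : k)) q) : p = q := by
  apply MvPolynomial.funext_set (fun _ => Set.range (fun z : ℤ => (z : k)))
    (fun _ => Set.infinite_range_of_injective Int.cast_injective)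
  intro x hx
  have : ∀ i, ∃ z : ℤ, (z : k) = x i := fun i => hx i trivial
  choose y hy using this
  have e : x = fun i => (y i : k) := funext fun i => (hy i).symm
  rw [e]; exact h y

/-- Restriction to a line. -/
def lineP (x m : Fin r → ℤ) : MvPolynomial (Fin r) k →ₐ[k] Polynomial k :=
  aeval (fun i => Polynomial.C (x i : k) + Polynomial.C (m i : k) * Polynomial.X)

theorem lineP_C (x m : Fin r → ℤ) (a : k) : lineP x m (C a) = Polynomial.C a := by
  simp [lineP]

theorem lineP_X (x m : Fin r → ℤ) (i : Fin r) : lineP (k := k) x m (X i) =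
    Polynomial.C (x i : k) + Polynomial.C (m i : k) * Polynomial.X := by
  simp [lineP]

theorem eval_lineP (x m : Fin r → ℤ) (p : MvPolynomial (Fin r) k) (t : k) :
    Polynomial.eval t (lineP x m p) = eval (fun i => (x i : k) + (m i : k) * t) p := by
  induction p using MvPolynomial.induction_on with
  | C a => simp
  | add p q hp hq => simp [hp, hq]
  | mul_X p i hp => simp [hp, lineP_X]

theorem assoc_stab [CharZero k] {p : MvPolynomial (Fin r) k} {m : Fin r → ℤ} {N : ℤ}
    (hN : N ≠ 0) (h : Associated p (polyTranslate k (N • m) p)) : polyTranslate k m p = p := by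
  obtain ⟨u, hu⟩ := h
  obtain ⟨c, hc, hcu⟩ := MvPolynomial.isUnit_iff_eq_C_of_isReduced.1 u.isUnit
  rw [hcu] at hu
  apply ext_int
  intro x
  set q := lineP (k := k) x m p with hq
  have hper : Polynomial.taylor (N : k) q = Polynomial.C c * q := by
    apply Polynomial.funext
    intro t
    rw [Polynomial.taylor_eval, Polynomial.eval_mul, Polynomial.eval_C, hq, eval_lineP, eval_lineP]
    have := congrArg (eval (fun i => (x i : k) + (m i : k) * t)) hu
    rw [eval_T, map_mul, eval_C] at this
    rw [mul_comm c, this]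
    congr 2
    funext i
    simp
    ring
  have hconst : Polynomial.eval 1 q = Polynomial.eval 0 q := by
    by_cases hq0 : q = 0
    · simp [hq0]
    have hc1 : c = 1 := by
      have := congrArg Polynomial.leadingCoeff hper
      rw [Polynomial.leadingCoeff_taylor, Polynomial.leadingCoeff_mul,
        Polynomial.leadingCoeff_C] at this
      have hl : q.leadingCoeff ≠ 0 := Polynomial.leadingCoeff_ne_zero.2 hq0
      exact mul_right_cancel₀ hl (by rw [one_mul]; exact this.symm)
    have hj : ∀ j : ℕ, Polynomial.eval ((j : k) * N) q = Polynomial.eval 0 q := by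
      intro j
      induction j with
      | zero => simp
      | succ j ih =>
        rw [← ih, Nat.cast_succ, add_mul, one_mul, ← Polynomial.taylor_eval, hper, hc1]
        simp
    have : q = Polynomial.C (Polynomial.eval 0 q) := by
      apply Polynomial.eq_of_infinite_eval_eq
      have hinj : Function.Injective (fun j : ℕ => (j : k) * (N : k)) := by
        intro a b hab
        have hN' : (N : k) ≠ 0 := by exact_mod_cast hN
        exact_mod_cast mul_right_cancel₀ hN' hab
      refine (Set.infinite_range_of_injective hinj).mono ?_
      rintro _ ⟨j, rfl⟩
      simp [hj]
    rw [this]; simp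
  rw [hq, eval_lineP, eval_lineP] at hconst
  rw [eval_T]
  simpa using hconst

theorem not_all_stab [CharZero k] {p : MvPolynomial (Fin r) k} (hp : Irreducible p) :
    ∃ m : Fin r → ℤ, ¬ Associated p (polyTranslate k m p) := by
  by_contra hcon
  push Not at hcon
  have h1 : ∀ m, polyTranslate k m p = p := fun m =>
    assoc_stab (N := 1) one_ne_zero (by simpa using hcon m)
  have h2 : p = C (eval (fun _ => 0) p) := by
    apply ext_int
    intro x
    have := congrArg (eval (fun _ => (0 : k))) (h1 x)
    rw [eval_T] at this
    simp only [zero_add] at this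
    rw [this]; simp
  have h3 : eval (fun _ => 0) p ≠ 0 := by
    intro h
    rw [h] at h2
    exact hp.ne_zero (by simpa using h2)
  apply hp.not_isUnit
  rw [h2]
  exact (isUnit_iff_ne_zero.2 h3).map C

theorem eval_hShift (h : Polynomial k) (n : Fin r → ℤ) (c : ℤ) (x : Fin r → k) :
    eval x (hShift k h n c) = Polynomial.eval (∑ i, (n i : k) * x i + c) h := by
  unfold hShift linForm
  rw [Polynomial.aeval_def, Polynomial.eval₂_eq_sum_range, map_sum, Polynomial.eval_eq_sum_range]
  apply Finset.sum_congr rfl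
  intro i _
  simp [MvPolynomial.algebraMap_eq]

theorem T_hShift [CharZero k] (h : Polynomial k) (n : Fin r → ℤ) (c : ℤ) (m : Fin r → ℤ) :
    polyTranslate k m (hShift k h n c) = hShift k h n (c + ∑ a, n a * m a) := by
  apply ext_int
  intro x
  rw [eval_T, eval_hShift, eval_hShift]
  congr 1
  simp only [mul_add, Finset.sum_add_distrib]
  push_cast
  ring

theorem hShift_line [CharZero k] {p : MvPolynomial (Fin r) k} {n m0 : Fin r → ℤ}
    (hm0 : ∑ a, n a * m0 a = 1)
    (hst : ∀ m : Fin r → ℤ, ∑ a, n a * m a = 0 → polyTranslate k m p = p) (c : ℤ) :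
    hShift k (lineP 0 m0 p) n c = polyTranslate k (c • m0) p := by
  apply ext_int
  intro x
  rw [eval_T, eval_hShift, eval_lineP]
  set s : ℤ := ∑ a, n a * x a with hs
  have hd := hst (x - s • m0) (by
    simp only [Pi.sub_apply, Pi.smul_apply, smul_eq_mul, mul_sub, Finset.sum_sub_distrib]
    rw [← hs]
    have : ∑ a, n a * (s * m0 a) = s * ∑ a, n a * m0 a := by
      rw [Finset.mul_sum]; exact Finset.sum_congr rfl fun i _ => by ring
    rw [this, hm0]; ring)
  have hs' : ∑ i, (n i : k) * (x i : k) = (s : k) := by rw [hs]; push_cast; rfl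
  rw [hs']
  conv_lhs => rw [← hd, eval_T]
  congr 2
  funext i
  simp
  ring

theorem line_irr [CharZero k] {p : MvPolynomial (Fin r) k} (hp : Irreducible p)
    {n m0 : Fin r → ℤ} (hm0 : ∑ a, n a * m0 a = 1)
    (hst : ∀ m : Fin r → ℤ, ∑ a, n a * m a = 0 → polyTranslate k m p = p) :
    Irreducible (lineP (k := k) 0 m0 p) := by
  have h0 : hShift k (lineP 0 m0 p) n 0 = p := by
    rw [hShift_line hm0 hst]; simp [T_zero]
  have hback : ∀ a : Polynomial k, lineP (k := k) 0 m0 (hShift k a n 0) = a := by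
    intro a
    apply Polynomial.funext
    intro t
    rw [eval_lineP, eval_hShift]
    congr 1
    simp only [Pi.zero_apply, Int.cast_zero, zero_add, add_zero]
    have : ∑ i, (n i : k) * ((m0 i : k) * t) = ((∑ a, n a * m0 a : ℤ) : k) * t := by
      push_cast
      rw [Finset.sum_mul]; exact Finset.sum_congr rfl fun i _ => by ring
    rw [this, hm0]; simp
  have hmul : ∀ a b : Polynomial k, hShift k (a * b) n 0 = hShift k a n 0 * hShift k b n 0 := by
    intro a b; simp [hShift]
  have hun : ∀ a : Polynomial k, IsUnit (hShift k a n 0) → IsUnit a := by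
    intro a ha
    rw [← hback a]; exact ha.map (lineP (k := k) 0 m0)
  constructor
  · intro hu
    apply hp.not_isUnit
    rw [← h0]
    exact hu.map (Polynomial.aeval (linForm k n + C ((0 : ℤ) : k)))
  · intro a b hab
    rw [hab, hmul] at h0
    rcases hp.isUnit_or_isUnit h0.symm with h | h
    · exact Or.inl (hun a h)
    · exact Or.inr (hun b h)
end Poly

section Divisors
variable {k : Type*} [Field k] {r : ℕ}

/-- Classes of irreducible polynomials up to units. -/
def Sirr (k : Type*) [Field k] (r : ℕ) : Type _ :=
  {s : Associates (MvPolynomial (Fin r) k) // Irreducible s}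

/-- A representative. -/
def rep (s : Sirr k r) : MvPolynomial (Fin r) k := Quot.out s.1

/-- The class of an irreducible polynomial. -/
def cls (p : MvPolynomial (Fin r) k) (hp : Irreducible p) : Sirr k r :=
  ⟨Associates.mk p, Associates.irreducible_mk.2 hp⟩

theorem mk_rep (s : Sirr k r) : Associates.mk (rep s) = s.1 := Associates.quot_out s.1

theorem rep_irr (s : Sirr k r) : Irreducible (rep s) := by
  rw [← Associates.irreducible_mk, mk_rep]; exact s.2

theorem rep_cls (p : MvPolynomial (Fin r) k) (hp : Irreducible p) : Associated (rep (cls p hp)) p :=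
  Associates.mk_quot_out p

theorem cls_rep (s : Sirr k r) : cls (rep s) (rep_irr s) = s := Subtype.ext (mk_rep s)

theorem cls_eq_iff {p q : MvPolynomial (Fin r) k} (hp : Irreducible p) (hq : Irreducible q) :
    cls p hp = cls q hq ↔ Associated p q := by
  rw [← Associates.mk_eq_mk_iff_associated]
  exact Subtype.ext_iff

theorem eq_of_assoc {s t : Sirr k r} (h : Associated (rep s) (rep t)) : s = t := by
  rw [← cls_rep s, ← cls_rep t, cls_eq_iff]; exact h

instance : VAdd (Fin r → ℤ) (Sirr k r) :=
  ⟨fun m s => cls (polyTranslate k m (rep s)) (T_irr m (rep_irr s))⟩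

theorem vadd_cls (m : Fin r → ℤ) (p : MvPolynomial (Fin r) k) (hp : Irreducible p) :
    m +ᵥ cls p hp = cls (polyTranslate k m p) (T_irr m hp) :=
  (cls_eq_iff _ _).2 (T_assoc m (rep_cls p hp))

instance : AddAction (Fin r → ℤ) (Sirr k r) where
  zero_vadd s := by
    conv_lhs => rw [← cls_rep s]
    conv_rhs => rw [← cls_rep s]
    rw [vadd_cls]; simp only [T_zero]
  add_vadd m m' s := by
    conv_lhs => rw [← cls_rep s]
    conv_rhs => rw [← cls_rep s]
    rw [vadd_cls, vadd_cls, vadd_cls]; simp only [T_T]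

theorem vadd_eq_iff (m : Fin r → ℤ) (s : Sirr k r) :
    m +ᵥ s = s ↔ Associated (rep s) (polyTranslate k m (rep s)) := by
  conv_lhs => rw [← cls_rep s]
  rw [vadd_cls, cls_eq_iff]
  exact Associated.comm

theorem stab_tf [CharZero k] (s : Sirr k r) (m : Fin r → ℤ) (N : ℤ) (hN : N ≠ 0)
    (h : (N • m) +ᵥ s = s) : m +ᵥ s = s := by
  rw [vadd_eq_iff] at h ⊢
  rw [assoc_stab hN h]

theorem stab_eq [CharZero k] (s : Sirr k r) (m : Fin r → ℤ)
    (h : m +ᵥ s = s) : polyTranslate k m (rep s) = rep s := by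
  rw [vadd_eq_iff] at h
  exact assoc_stab (N := 1) one_ne_zero (by simpa using h)

theorem stab_ne [CharZero k] (s : Sirr k r) : ∃ m : Fin r → ℤ, m +ᵥ s ≠ s := by
  obtain ⟨m, hm⟩ := not_all_stab (rep_irr s)
  exact ⟨m, fun h => hm ((vadd_eq_iff m s).1 h)⟩

theorem toRat_ne_zero {p : MvPolynomial (Fin r) k} (hp : p ≠ 0) : toRat k r p ≠ 0 := by
  unfold toRat
  rwa [Ne, FaithfulSMul.algebraMap_eq_zero_iff]

/-- A nonzero polynomial as a unit of the fraction field. -/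
def toU (p : MvPolynomial (Fin r) k) (hp : p ≠ 0) : (RatFuncField k r)ˣ :=
  Units.mk0 (toRat k r p) (toRat_ne_zero hp)

/-- Constants. -/
def cst (k : Type*) [Field k] (r : ℕ) : kˣ →* (RatFuncField k r)ˣ :=
  Units.map ((algebraMap (MvPolynomial (Fin r) k) (RatFuncField k r)).comp
    (C : k →+* MvPolynomial (Fin r) k)).toMonoidHom

theorem cst_val (c : kˣ) : (cst k r c : RatFuncField k r) = toRat k r (C (c : k)) := rfl

/-- The element attached to a divisor. -/
def Phi (f : Sirr k r →₀ ℤ) : (RatFuncField k r)ˣ :=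
  f.prod fun s z => toU (rep s) (rep_irr s).ne_zero ^ z

theorem Phi_add (f g : Sirr k r →₀ ℤ) : Phi (f + g) = Phi f * Phi g := by
  classical
  exact Finsupp.prod_add_index' (fun _ => zpow_zero _) (fun _ _ _ => zpow_add _ _ _)

theorem Phi_zero : Phi (0 : Sirr k r →₀ ℤ) = 1 := Finsupp.prod_zero_index

theorem Phi_single (s : Sirr k r) (z : ℤ) :
    Phi (Finsupp.single s z) = toU (rep s) (rep_irr s).ne_zero ^ z :=
  Finsupp.prod_single_index (zpow_zero _)

/-- `x` has divisor `f`. -/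
def IsDiv (x : (RatFuncField k r)ˣ) (f : Sirr k r →₀ ℤ) : Prop :=
  ∃ c : kˣ, x = cst k r c * Phi f

theorem IsDiv.mul {x y : (RatFuncField k r)ˣ} {f g : Sirr k r →₀ ℤ} (hx : IsDiv x f)
    (hy : IsDiv y g) : IsDiv (x * y) (f + g) := by
  obtain ⟨c, rfl⟩ := hx
  obtain ⟨d, rfl⟩ := hy
  exact ⟨c * d, by rw [map_mul, Phi_add]; exact mul_mul_mul_comm _ _ _ _⟩

theorem Phi_neg (f : Sirr k r →₀ ℤ) : Phi (-f) = (Phi f)⁻¹ := by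
  rw [eq_inv_iff_mul_eq_one, ← Phi_add, neg_add_cancel, Phi_zero]

theorem IsDiv.inv {x : (RatFuncField k r)ˣ} {f : Sirr k r →₀ ℤ} (hx : IsDiv x f) :
    IsDiv x⁻¹ (-f) := by
  obtain ⟨c, rfl⟩ := hx
  exact ⟨c⁻¹, by rw [map_inv, Phi_neg, mul_inv]⟩

theorem IsDiv.one : IsDiv (1 : (RatFuncField k r)ˣ) 0 := ⟨1, by simp [Phi_zero]⟩

theorem IsDiv.prod {ι : Type*} (t : Finset ι) (x : ι → (RatFuncField k r)ˣ)
    (f : ι → Sirr k r →₀ ℤ) (h : ∀ i ∈ t, IsDiv (x i) (f i)) :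
    IsDiv (∏ i ∈ t, x i) (∑ i ∈ t, f i) := by
  classical
  induction t using Finset.induction_on with
  | empty => simpa using IsDiv.one
  | insert a t ha ih =>
    rw [Finset.prod_insert ha, Finset.sum_insert ha]
    exact (h a (Finset.mem_insert_self _ _)).mul
      (ih fun i hi => h i (Finset.mem_insert_of_mem hi))

theorem IsDiv.zpow {x : (RatFuncField k r)ˣ} {f : Sirr k r →₀ ℤ} (hx : IsDiv x f) (z : ℤ) :
    IsDiv (x ^ z) (z • f) := by
  induction z using Int.induction_on with
  | zero => simpa using IsDiv.one
  | succ i ih => rw [zpow_add_one, add_smul, one_smul]; exact ih.mul hx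
  | pred i ih => rw [zpow_sub_one, sub_smul, one_smul, sub_eq_add_neg]; exact ih.mul hx.inv

theorem toU_mul {p q : MvPolynomial (Fin r) k} (hp : p ≠ 0) (hq : q ≠ 0) :
    toU (p * q) (mul_ne_zero hp hq) = toU p hp * toU q hq := by
  apply Units.ext
  simp [toU, toRat]

theorem isDiv_unit {p : MvPolynomial (Fin r) k} (hp : p ≠ 0) (hu : IsUnit p) :
    IsDiv (toU p hp) 0 := by
  obtain ⟨c, hc, rfl⟩ := MvPolynomial.isUnit_iff_eq_C_of_isReduced.1 hu
  refine ⟨hc.unit, ?_⟩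
  apply Units.ext
  simp [Phi_zero, toU, cst_val]

theorem isDiv_irr {p : MvPolynomial (Fin r) k} (hp : Irreducible p) :
    IsDiv (toU p hp.ne_zero) (Finsupp.single (cls p hp) 1) := by
  obtain ⟨u, hu⟩ := rep_cls p hp
  have h1 : IsDiv (toU (rep (cls p hp)) (rep_irr _).ne_zero) (Finsupp.single (cls p hp) 1) :=
    ⟨1, by rw [Phi_single]; simp⟩
  have h2 := h1.mul (isDiv_unit u.ne_zero u.isUnit)
  rw [← toU_mul, add_zero] at h2
  convert h2 using 2
  exact hu.symm

theorem isDiv_poly (p : MvPolynomial (Fin r) k) : ∀ hp : p ≠ 0, ∃ f, IsDiv (toU p hp) f := by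
  induction p using UniqueFactorizationMonoid.induction_on_prime with
  | h₁ => intro h; exact absurd rfl h
  | h₂ x hx => intro h; exact ⟨0, isDiv_unit h hx⟩
  | h₃ a p ha hp ih =>
    intro h
    obtain ⟨f, hf⟩ := ih ha
    have := (isDiv_irr hp.irreducible).mul hf
    rw [← toU_mul] at this
    exact ⟨_, this⟩

theorem isDiv_exists (x : (RatFuncField k r)ˣ) : ∃ f, IsDiv x f := by
  obtain ⟨a, b, hb, hab⟩ := IsFractionRing.div_surjective (A := MvPolynomial (Fin r) k)
    (x : RatFuncField k r)
  have hb0 : b ≠ 0 := nonZeroDivisors.ne_zero hb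
  have ha0 : a ≠ 0 := by
    rintro rfl
    apply x.ne_zero
    rw [← hab]; simp
  obtain ⟨f, hf⟩ := isDiv_poly a ha0
  obtain ⟨g, hg⟩ := isDiv_poly b hb0
  refine ⟨f + -g, ?_⟩
  convert hf.mul hg.inv
  apply Units.ext
  rw [← hab]
  simp [toU, toRat, div_eq_mul_inv]

theorem isDiv_one_nonpos {f : Sirr k r →₀ ℤ} (h : IsDiv 1 f) (s : Sirr k r) : f s ≤ 0 := by
  by_contra hs
  push Not at hs
  obtain ⟨c, hc⟩ := h
  have key : C (c : k) * ∏ t ∈ f.support, rep t ^ (f t).toNat =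
      ∏ t ∈ f.support, rep t ^ (-f t).toNat := by
    apply FaithfulSMul.algebraMap_injective (MvPolynomial (Fin r) k) (RatFuncField k r)
    have h1 := congrArg (fun u : (RatFuncField k r)ˣ => (u : RatFuncField k r)) hc
    simp only [Units.val_one, Units.val_mul, cst_val, Phi, Finsupp.prod, Units.coe_prod,
      Units.val_zpow_eq_zpow_val, toU, Units.val_mk0, toRat] at h1
    rw [map_mul, map_prod, map_prod]
    simp only [map_pow]
    set d := ∏ t ∈ f.support, (algebraMap (MvPolynomial (Fin r) k) (RatFuncField k r)) (rep t) ^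
      (-f t).toNat with hd
    rw [← one_mul d, h1, mul_assoc]
    congr 1
    rw [hd, ← Finset.prod_mul_distrib]
    apply Finset.prod_congr rfl
    intro t _
    have hne := toRat_ne_zero (rep_irr t).ne_zero
    unfold toRat at hne
    rw [← zpow_natCast, ← zpow_natCast, ← zpow_add₀ hne]
    congr 1
    omega
  have hprime : Prime (rep s) := (rep_irr s).prime
  have hd : rep s ∣ ∏ t ∈ f.support, rep t ^ (-f t).toNat := by
    rw [← key]
    apply Dvd.dvd.mul_left
    refine dvd_trans ?_ (Finset.dvd_prod_of_mem _ (Finsupp.mem_support_iff.2 hs.ne'))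
    exact dvd_pow_self _ (by omega)
  obtain ⟨t, _, ht⟩ := hprime.exists_mem_finset_dvd hd
  have hne : (-f t).toNat ≠ 0 := by
    intro h0
    rw [h0, pow_zero] at ht
    exact hprime.not_isUnit (isUnit_of_dvd_one ht)
  have h3 := hprime.dvd_of_dvd_pow ht
  have h4 := eq_of_assoc ((rep_irr s).associated_of_dvd (rep_irr t) h3)
  subst h4
  omega

theorem isDiv_unique {x : (RatFuncField k r)ˣ} {f g : Sirr k r →₀ ℤ} (hf : IsDiv x f)
    (hg : IsDiv x g) : f = g := by
  have h1 := hf.mul hg.inv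
  have h2 := hg.mul hf.inv
  rw [mul_inv_cancel] at h1 h2
  ext s
  have h3 := isDiv_one_nonpos h1 s
  have h4 := isDiv_one_nonpos h2 s
  simp at h3 h4
  omega

theorem isDiv_zero {x : (RatFuncField k r)ˣ} (h : IsDiv x 0) : ∃ c : kˣ, x = cst k r c := by
  obtain ⟨c, hc⟩ := h
  exact ⟨c, by rw [hc, Phi_zero, mul_one]⟩

section Tau
variable (τ : (Fin r → ℤ) → (RatFuncField k r →+* RatFuncField k r))

/-- Translation on units. -/
def sg (m : Fin r → ℤ) : (RatFuncField k r)ˣ →* (RatFuncField k r)ˣ :=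
  Units.map (τ m).toMonoidHom

theorem sg_val (m : Fin r → ℤ) (x : (RatFuncField k r)ˣ) :
    (sg τ m x : RatFuncField k r) = τ m x := rfl

variable {τ}

theorem sg_cst (hτ : ∀ (m : Fin r → ℤ) (p : MvPolynomial (Fin r) k),
      τ m (toRat k r p) = toRat k r (polyTranslate k m p))
    (m : Fin r → ℤ) (c : kˣ) : sg τ m (cst k r c) = cst k r c := by
  apply Units.ext
  rw [sg_val, cst_val, hτ, T_C]

theorem sg_toU (hτ : ∀ (m : Fin r → ℤ) (p : MvPolynomial (Fin r) k),
      τ m (toRat k r p) = toRat k r (polyTranslate k m p))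
    (m : Fin r → ℤ) (p : MvPolynomial (Fin r) k) (hp : p ≠ 0)
    (hp' : polyTranslate k m p ≠ 0) : sg τ m (toU p hp) = toU (polyTranslate k m p) hp' := by
  apply Units.ext
  rw [sg_val]
  exact hτ m p

theorem isDiv_sg_Phi (hτ : ∀ (m : Fin r → ℤ) (p : MvPolynomial (Fin r) k),
      τ m (toRat k r p) = toRat k r (polyTranslate k m p))
    (m : Fin r → ℤ) (f : Sirr k r →₀ ℤ) :
    IsDiv (sg τ m (Phi f)) (Finsupp.mapDomain (fun s => m +ᵥ s) f) := by
  classical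
  induction f using Finsupp.induction_linear with
  | zero => simpa [Phi_zero] using IsDiv.one
  | add f g hf hg => rw [Phi_add, map_mul, Finsupp.mapDomain_add]; exact hf.mul hg
  | single s z =>
    rw [Finsupp.mapDomain_single, Phi_single, map_zpow,
      sg_toU hτ m _ _ (T_irr m (rep_irr s)).ne_zero]
    have := (isDiv_irr (T_irr m (rep_irr s))).zpow z
    rw [Finsupp.smul_single, smul_eq_mul, mul_one] at this
    exact this

theorem IsDiv.sg (hτ : ∀ (m : Fin r → ℤ) (p : MvPolynomial (Fin r) k),
      τ m (toRat k r p) = toRat k r (polyTranslate k m p))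
    (m : Fin r → ℤ) {x : (RatFuncField k r)ˣ} {f : Sirr k r →₀ ℤ} (h : IsDiv x f) :
    IsDiv (sg τ m x) (Finsupp.mapDomain (fun s => m +ᵥ s) f) := by
  obtain ⟨c, rfl⟩ := h
  rw [map_mul, sg_cst hτ]
  obtain ⟨d, hd⟩ := isDiv_sg_Phi hτ m f
  exact ⟨c * d, by rw [hd, map_mul, mul_assoc]⟩

theorem coc_of_coc (hτ : ∀ (m : Fin r → ℤ) (p : MvPolynomial (Fin r) k),
      τ m (toRat k r p) = toRat k r (polyTranslate k m p))
    {e : (Fin r → ℤ) → (RatFuncField k r)ˣ} {γ : (Fin r → ℤ) → Sirr k r →₀ ℤ}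
    (he : ∀ m m', e (m + m') = _root_.sg τ m (e m') * e m) (hγ : ∀ m, IsDiv (e m) (γ m)) :
    IsCoc γ := by
  intro m m'
  refine isDiv_unique (hγ (m + m')) ?_
  rw [he]
  exact ((hγ m').sg hτ m).mul (hγ m)
end Tau
end Divisors

section Factor

/-- Signed product over an integer interval. -/
def Qf {A : Type*} [CommGroup A] (H : ℤ → A) (j N : ℤ) : A :=
  if 1 ≤ N then ∏ ν ∈ Finset.range N.toNat, H (j + ν)
  else if N = 0 then 1
  else (∏ ν ∈ Finset.range (-N).toNat, H (N + j + ν))⁻¹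

theorem Qf_zero {A : Type*} [CommGroup A] (H : ℤ → A) (j : ℤ) : Qf H j 0 = 1 := by simp [Qf]

theorem Qf_nat {A : Type*} [CommGroup A] (H : ℤ → A) (j : ℤ) (n : ℕ) :
    Qf H j n = ∏ ν ∈ Finset.range n, H (j + ν) := by
  rcases Nat.eq_zero_or_pos n with rfl | hn
  · simp [Qf]
  · rw [Qf, if_pos (by exact_mod_cast hn)]; simp

theorem Qf_neg {A : Type*} [CommGroup A] (H : ℤ → A) (j : ℤ) (n : ℕ) :
    Qf H j (-n) = (∏ ν ∈ Finset.range n, H (-n + j + ν))⁻¹ := by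
  rcases Nat.eq_zero_or_pos n with rfl | hn
  · simp [Qf]
  · rw [Qf, if_neg (by omega), if_neg (by omega)]; simp

theorem Qf_succ {A : Type*} [CommGroup A] (H : ℤ → A) (j N : ℤ) :
    Qf H j (N + 1) = Qf H j N * H (j + N) := by
  rcases lt_or_ge N 0 with hN | hN
  · obtain ⟨n, rfl⟩ : ∃ n : ℕ, N = -((n + 1 : ℕ) : ℤ) := ⟨(-N - 1).toNat, by omega⟩
    rw [Qf_neg, show -((n + 1 : ℕ) : ℤ) + 1 = -(n : ℤ) by push_cast; ring, Qf_neg,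
      Finset.prod_range_succ', mul_inv, Nat.cast_zero, add_zero, add_comm j,
      inv_mul_cancel_right]
    congr 1
    apply Finset.prod_congr rfl
    intro ν _
    congr 1
    push_cast; ring
  · lift N to ℕ using hN
    rw [Qf_nat, ← Nat.cast_succ, Qf_nat, Finset.prod_range_succ]

theorem Qf_add {A : Type*} [CommGroup A] (H : ℤ → A) (j N M : ℤ) :
    Qf H j (N + M) = Qf H (j + N) M * Qf H j N := by
  induction M using Int.induction_on with
  | zero => simp [Qf_zero]
  | succ i ih => rw [← add_assoc, Qf_succ, ih, Qf_succ, ← add_assoc]; exact mul_right_comm _ _ _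
  | pred i ih =>
    have h1 := Qf_succ H j (N + (-i - 1))
    have h2 := Qf_succ H (j + N) (-i - 1)
    rw [show N + (-(i : ℤ) - 1) + 1 = N + -i by ring, ih] at h1
    rw [show (-(i : ℤ) - 1) + 1 = -i by ring] at h2
    rw [h2, show j + N + (-(i : ℤ) - 1) = j + (N + (-i - 1)) by ring] at h1
    apply mul_right_cancel (b := H (j + (N + (-i - 1))))
    rw [← h1]; exact mul_right_comm _ _ _

theorem Qf_map {A B : Type*} [CommGroup A] [CommGroup B] (φ : A →* B) (H : ℤ → A) (j N : ℤ) :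
    φ (Qf H j N) = Qf (fun c => φ (H c)) j N := by
  unfold Qf
  split_ifs <;> simp

theorem Qf_shift {A : Type*} [CommGroup A] (H : ℤ → A) (j N d : ℤ) :
    Qf (fun c => H (c + d)) j N = Qf H (j + d) N := by
  unfold Qf
  split_ifs
  · exact Finset.prod_congr rfl fun ν _ => by ring_nf
  · rfl
  · congr 1
    exact Finset.prod_congr rfl fun ν _ => by ring_nf

variable {k : Type*} [Field k] {r : ℕ}

theorem Qf_val (h : Polynomial k) (n : Fin r → ℤ) (hne : ∀ c, hShift k h n c ≠ 0) (j : ℤ)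
    (m : Fin r → ℤ) : ((Qf (fun c => toU (hShift k h n c) (hne c)) j (∑ a, n a * m a) :
      (RatFuncField k r)ˣ) : RatFuncField k r) = hgFactor k h n j m := by
  unfold Qf hgFactor
  split_ifs <;> simp [toU, toRat]

/-- The data attached to a single orbit. -/
theorem orbit_lift [CharZero k]
    {τ : (Fin r → ℤ) → (RatFuncField k r →+* RatFuncField k r)}
    (hτ : ∀ (m : Fin r → ℤ) (p : MvPolynomial (Fin r) k),
      τ m (toRat k r p) = toRat k r (polyTranslate k m p))
    (s0 : Sirr k r) (β : (Fin r → ℤ) → Sirr k r →₀ ℤ) (hβ : IsCoc β)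
    (hsup : ∀ m s, s ∉ AddAction.orbit (Fin r → ℤ) s0 → β m s = 0) :
    ∃ (F : (RatFuncField k r)ˣ) (h : Polynomial k) (n : Fin r → ℤ) (z : ℤ →₀ ℤ)
      (e : (Fin r → ℤ) → (RatFuncField k r)ˣ),
      Irreducible h ∧ n ≠ 0 ∧ (∃ m : Fin r → ℤ, ∑ a, n a * m a = 1) ∧
      (∀ m, IsDiv (e m) (β m)) ∧
      (∀ m m', e (m + m') = sg τ m (e m') * e m) ∧
      (∀ m, (e m : RatFuncField k r) = (τ m (F : RatFuncField k r) * (F : RatFuncField k r)⁻¹) *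
        ∏ j ∈ z.support, hgFactor k h n j m ^ (z j)) := by
  classical
  obtain ⟨g0, hg0⟩ := stab_ne s0
  have sg_sg : ∀ (m m' : Fin r → ℤ) (x : (RatFuncField k r)ˣ),
      sg τ (m + m') x = sg τ m (sg τ m' x) := by
    intro m m' x
    apply Units.ext
    simp only [sg_val]
    obtain ⟨a, b, hb, hab⟩ := IsFractionRing.div_surjective (A := MvPolynomial (Fin r) k)
      (x : RatFuncField k r)
    rw [← hab]
    change τ (m + m') (toRat k r a / toRat k r b) = τ m (τ m' (toRat k r a / toRat k r b))
    simp only [map_div₀, hτ, T_T]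
  rcases rank_cases (stab_tf s0) hg0 with ⟨g₁, g₂, hind⟩ | ⟨μ, hμs, hμ⟩
  · obtain ⟨f, hf⟩ := coc_rank_two hβ hsup (stab_tf s0) g₁ g₂ hind
    have hr : ∃ a : Fin r, g0 a ≠ 0 := by
      by_contra hcon
      push Not at hcon
      apply hg0
      rw [show g0 = 0 from funext hcon, zero_vadd]
    obtain ⟨a, -⟩ := hr
    have hPhi : IsDiv (Phi f) f := ⟨1, by simp⟩
    refine ⟨Phi f, Polynomial.X, Pi.single a 1, 0, fun m => sg τ m (Phi f) * (Phi f)⁻¹,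
      Polynomial.irreducible_X, ?_, ⟨Pi.single a 1, ?_⟩, ?_, ?_, ?_⟩
    · intro h
      have := congrFun h a
      simp at this
    · simp [Pi.single_apply]
    · intro m
      rw [hf, sub_eq_add_neg]
      exact (hPhi.sg hτ m).mul hPhi.inv
    · intro m m'
      simp only
      rw [sg_sg, map_mul, map_inv, ← mul_assoc, inv_mul_cancel_right]
    · intro m
      simp [sg_val]
  · obtain ⟨m0, hm0⟩ := hμs 1
    let n : Fin r → ℤ := fun a => μ (Pi.single a 1)
    have hn : ∀ m : Fin r → ℤ, ∑ a, n a * m a = μ m := by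
      intro m
      conv_rhs => rw [← Finset.univ_sum_single m]
      rw [map_sum]
      apply Finset.sum_congr rfl
      intro a _
      have : (Pi.single a (m a) : Fin r → ℤ) = m a • Pi.single a 1 := by
        ext i
        by_cases hi : i = a
        · subst hi; simp
        · simp [hi]
      rw [this, map_zsmul, smul_eq_mul, mul_comm]
    have hst : ∀ m : Fin r → ℤ, ∑ a, n a * m a = 0 → polyTranslate k m (rep s0) = rep s0 := by
      intro m hm
      rw [hn] at hm
      exact stab_eq s0 m ((hμ m).2 hm)
    have hm0' : ∑ a, n a * m0 a = 1 := by rw [hn, hm0]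
    let h : Polynomial k := lineP 0 m0 (rep s0)
    have hsh : ∀ c, hShift k h n c = polyTranslate k (c • m0) (rep s0) := hShift_line hm0' hst
    have hirr : ∀ c, Irreducible (hShift k h n c) := by
      intro c; rw [hsh]; exact T_irr _ (rep_irr s0)
    have hne : ∀ c, hShift k h n c ≠ 0 := fun c => (hirr c).ne_zero
    let H : ℤ → (RatFuncField k r)ˣ := fun c => toU (hShift k h n c) (hne c)
    have hcls : ∀ c, IsDiv (H c) (Finsupp.single ((c • m0) +ᵥ s0) 1) := by
      intro c
      have := isDiv_irr (hirr c)
      convert this using 2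
      conv_lhs => rw [← cls_rep s0]
      rw [vadd_cls, cls_eq_iff, hsh]
    have hinj : Function.Injective (fun c : ℤ => (c • m0) +ᵥ s0) := by
      have := line_inj (stab_tf s0) (g := m0)
        (by intro hc; rw [hμ, hm0] at hc; exact one_ne_zero hc) 0
      simpa using this
    let z : ℤ →₀ ℤ := (β m0).comapDomain (fun c : ℤ => (c • m0) +ᵥ s0) hinj.injOn
    have hz : Finsupp.mapDomain (fun c : ℤ => (c • m0) +ᵥ s0) z = β m0 := by
      apply Finsupp.mapDomain_comapDomain _ hinj
      intro s hs
      have ho : s ∈ AddAction.orbit (Fin r → ℤ) s0 := by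
        by_contra ho
        exact (Finsupp.mem_support_iff.1 hs) (hsup _ _ ho)
      obtain ⟨g, rfl⟩ := ho
      refine ⟨μ g, ?_⟩
      simp only
      have : (g - μ g • m0) +ᵥ s0 = s0 := by
        rw [hμ, map_sub, map_zsmul, hm0]; simp
      conv_lhs => rw [← this]
      rw [vadd_vadd, add_sub_cancel]
    let e : (Fin r → ℤ) → (RatFuncField k r)ˣ := fun m =>
      ∏ j ∈ z.support, (Qf H j (∑ a, n a * m a)) ^ (z j)
    have hsgH : ∀ m c, sg τ m (H c) = H (c + ∑ a, n a * m a) := by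
      intro m c
      apply Units.ext
      rw [sg_val]
      change τ m (toRat k r _) = toRat k r _
      rw [hτ, T_hShift]
    have hecoc : ∀ m m', e (m + m') = sg τ m (e m') * e m := by
      intro m m'
      simp only [e, map_prod, map_zpow]
      rw [← Finset.prod_mul_distrib]
      apply Finset.prod_congr rfl
      intro j _
      rw [← mul_zpow]
      congr 1
      rw [Qf_map]
      simp only [hsgH]
      rw [Qf_shift, ← Qf_add]
      congr 1
      rw [hn, hn, hn, map_add]
    choose γ hγ using fun m => isDiv_exists (e m)
    have hγc : IsCoc γ := coc_of_coc hτ hecoc hγ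
    have hβγ : ∀ m, β m = γ m := by
      apply coc_eq_of hβ hγc μ m0 hm0
      · refine isDiv_unique ?_ (hγ m0)
        simp only [e, hm0']
        rw [← hz]
        apply IsDiv.prod
        intro j _
        have h1 := (hcls j).zpow (z j)
        rw [Finsupp.smul_single, smul_eq_mul, mul_one] at h1
        have h2 : Qf H j 1 = H j := by simp [Qf]
        rw [h2]
        exact h1
      · intro g hg
        rw [coc_stab hβ hsup (stab_tf s0) hg0 ((hμ g).2 hg)]
        refine isDiv_unique ?_ (hγ g)
        have : e g = 1 := by
          simp only [e, hn, hg, Qf_zero, one_zpow, Finset.prod_const_one]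
        rw [this]
        exact IsDiv.one
    refine ⟨1, h, n, z, e, line_irr (rep_irr s0) hm0' hst, ?_, ⟨m0, hm0'⟩, ?_, hecoc, ?_⟩
    · intro h0
      rw [h0] at hm0'
      simp at hm0'
    · intro m
      rw [hβγ]; exact hγ m
    · intro m
      simp only [e, Units.coe_prod, Units.val_zpow_eq_zpow_val, Units.val_one, map_one, inv_one,
        mul_one, one_mul]
      exact Finset.prod_congr rfl fun j _ => by rw [← Qf_val h n hne j m]

theorem fin_orbits (β : (Fin r → ℤ) → Sirr k r →₀ ℤ) (hβ : IsCoc β) :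
    ∃ Ω : Finset (Quotient (AddAction.orbitRel (Fin r → ℤ) (Sirr k r))),
      ∀ m s, Quotient.mk _ s ∉ Ω → β m s = 0 := by
  classical
  let Ω : Finset (Quotient (AddAction.orbitRel (Fin r → ℤ) (Sirr k r))) :=
    Finset.univ.biUnion fun a : Fin r => (β (Pi.single a 1)).support.image (Quotient.mk _)
  refine ⟨Ω, ?_⟩
  have hinv : ∀ (m : Fin r → ℤ) (s : Sirr k r), (Quotient.mk
      (AddAction.orbitRel (Fin r → ℤ) (Sirr k r)) (m +ᵥ s)) = Quotient.mk _ s := by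
    intro m s
    apply Quotient.sound
    exact ⟨m, rfl⟩
  have hadd : ∀ a b, (∀ s, Quotient.mk _ s ∉ Ω → β a s = 0) →
      (∀ s, Quotient.mk _ s ∉ Ω → β b s = 0) → (∀ s, Quotient.mk _ s ∉ Ω → β (a + b) s = 0) := by
    intro a b ha hb s hs
    rw [hβ.apply, ha s hs, hb _ (by rw [hinv]; exact hs), add_zero]
  have h0 : ∀ s, β 0 s = 0 := by
    intro s
    have := hβ.apply 0 0 s
    simpa using this
  have hneg : ∀ a, (∀ s, Quotient.mk _ s ∉ Ω → β a s = 0) →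
      (∀ s, Quotient.mk _ s ∉ Ω → β (-a) s = 0) := by
    intro a ha s hs
    have := hβ.apply (-a) a s
    rw [neg_add_cancel, h0, ha _ (by rw [hinv]; exact hs)] at this
    linarith
  let P : AddSubgroup (Fin r → ℤ) :=
    { carrier := {m | ∀ s, Quotient.mk _ s ∉ Ω → β m s = 0}
      zero_mem' := fun s _ => h0 s
      add_mem' := fun {a b} ha hb => hadd a b ha hb
      neg_mem' := fun {a} ha => hneg a ha }
  intro m
  have : m ∈ P := by
    rw [← Finset.univ_sum_single m]
    apply P.sum_mem
    intro a _
    have e1 : (Pi.single a (m a) : Fin r → ℤ) = m a • Pi.single a 1 := by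
      ext i
      by_cases hi : i = a
      · subst hi; simp
      · simp [hi]
    rw [e1]
    apply P.zsmul_mem
    intro s hs
    by_contra hne
    apply hs
    refine Finset.mem_biUnion.2 ⟨a, Finset.mem_univ _, ?_⟩
    exact Finset.mem_image_of_mem _ (Finsupp.mem_support_iff.2 hne)
  exact this
end Factor

/-- **The Ore–Sato theorem** (existence form). -/
theorem ore_sato (k : Type*) [Field k] [CharZero k] (r : ℕ)
    (τ : (Fin r → ℤ) → (RatFuncField k r →+* RatFuncField k r))
    (hτ : ∀ (m : Fin r → ℤ) (p : MvPolynomial (Fin r) k),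
      τ m (toRat k r p) = toRat k r (polyTranslate k m p))
    (b : (Fin r → ℤ) → (RatFuncField k r)ˣ)
    (hb : ∀ m m' : Fin r → ℤ,
      ((b (m + m') : RatFuncField k r)) = τ m (b m') * (b m)) :
    ∃ (c : (Fin r → ℤ) → kˣ) (F : (RatFuncField k r)ˣ) (l : ℕ)
      (h : Fin l → Polynomial k) (n : Fin l → (Fin r → ℤ)) (z : Fin l → (ℤ →₀ ℤ)),
      (∀ m m' : Fin r → ℤ, c (m + m') = c m * c m') ∧
      (∀ i, Irreducible (h i)) ∧
      (∀ i, n i ≠ 0) ∧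
      (∀ i, ∃ m : Fin r → ℤ, ∑ a, n i a * m a = 1) ∧
      (∀ m : Fin r → ℤ,
        (b m : RatFuncField k r) =
          toRat k r (C ((c m : k))) * (τ m (F : RatFuncField k r) * (F : RatFuncField k r)⁻¹) *
            ∏ i, ∏ j ∈ (z i).support, hgFactor k (h i) (n i) j m ^ (z i j)) := by
  classical
  choose β hβd using fun m => isDiv_exists (b m)
  have hbu : ∀ m m', b (m + m') = sg τ m (b m') * b m := by
    intro m m'
    apply Units.ext
    exact hb m m'
  have hβ : IsCoc β := coc_of_coc hτ hbu hβd
  obtain ⟨Ω, hΩ⟩ := fin_orbits β hβ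
  let mkq : Sirr k r → Quotient (AddAction.orbitRel (Fin r → ℤ) (Sirr k r)) := Quotient.mk _
  have hinv : ∀ (m : Fin r → ℤ) (s : Sirr k r), mkq (m +ᵥ s) = mkq s := by
    intro m s
    exact Quotient.sound ⟨m, rfl⟩
  let βω : Quotient (AddAction.orbitRel (Fin r → ℤ) (Sirr k r)) → (Fin r → ℤ) → Sirr k r →₀ ℤ :=
    fun ω m => (β m).filter (fun s => mkq s = ω)
  have hβω : ∀ ω, IsCoc (βω ω) := by
    intro ω m m'
    ext s
    rw [Finsupp.add_apply, mapDomain_vadd]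
    simp only [βω, Finsupp.filter_apply, hinv]
    split_ifs
    · exact hβ.apply m m' s
    · simp
  have hlift : ∀ ω, _ := fun ω => orbit_lift hτ ω.out (βω ω) (hβω ω) (by
    intro m s hs
    simp only [βω, Finsupp.filter_apply]
    rw [if_neg]
    intro hsω
    apply hs
    rw [← AddAction.orbitRel_apply]
    apply Quotient.exact (s := AddAction.orbitRel (Fin r → ℤ) (Sirr k r))
    rw [Quotient.out_eq]
    exact hsω)
  choose F h n z e hirr hn0 hn1 hdiv hcoc hval using hlift
  have hsum : ∀ m, β m = ∑ ω ∈ Ω, βω ω m := by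
    intro m
    ext s
    rw [Finsupp.finsetSum_apply]
    simp only [βω, Finsupp.filter_apply]
    rw [Finset.sum_ite_eq]
    split_ifs with hs
    · rfl
    · exact hΩ m s hs
  have hE : ∀ m, IsDiv (∏ ω ∈ Ω, e ω m) (β m) := by
    intro m
    rw [hsum]
    exact IsDiv.prod _ _ _ fun ω _ => hdiv ω m
  have hc : ∀ m, ∃ c : kˣ, b m * (∏ ω ∈ Ω, e ω m)⁻¹ = cst k r c := by
    intro m
    apply isDiv_zero
    have := (hβd m).mul (hE m).inv
    rwa [add_neg_cancel] at this
  choose c hc using hc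
  have hcinj : Function.Injective (cst k r) := by
    intro a b hab
    apply Units.ext
    have h1 := congrArg (fun u : (RatFuncField k r)ˣ => (u : RatFuncField k r)) hab
    simp only [cst_val] at h1
    exact C_injective _ _
      (FaithfulSMul.algebraMap_injective (MvPolynomial (Fin r) k) (RatFuncField k r) h1)
  have hbc : ∀ m, b m = cst k r (c m) * ∏ ω ∈ Ω, e ω m := by
    intro m
    rw [← hc, inv_mul_cancel_right]
  let φ : Fin Ω.card ≃ Ω := Ω.equivFin.symm
  refine ⟨c, ∏ ω ∈ Ω, F ω, Ω.card, fun i => h (φ i), fun i => n (φ i), fun i => z (φ i), ?_,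
    fun i => hirr _, fun i => hn0 _, fun i => hn1 _, ?_⟩
  · intro m m'
    apply hcinj
    have h1 : ∏ ω ∈ Ω, e ω (m + m') = sg τ m (∏ ω ∈ Ω, e ω m') * ∏ ω ∈ Ω, e ω m := by
      rw [map_prod, ← Finset.prod_mul_distrib]
      exact Finset.prod_congr rfl fun ω _ => hcoc ω m m'
    rw [map_mul, ← hc (m + m'), hbu, h1, hbc m, hbc m', map_mul, sg_cst hτ]
    generalize sg τ m (∏ ω ∈ Ω, e ω m') = y
    generalize (∏ ω ∈ Ω, e ω m) = x
    rw [mul_inv_eq_iff_eq_mul]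
    simp only [mul_comm, mul_left_comm, mul_assoc]
  · intro m
    rw [hbc m, Units.val_mul, cst_val, mul_assoc]
    congr 1
    rw [Units.coe_prod, Units.coe_prod, map_prod, ← Finset.prod_inv_distrib,
      ← Finset.prod_mul_distrib]
    rw [Equiv.prod_comp φ (fun ω : Ω => ∏ j ∈ (z ω).support,
      hgFactor k (h ω) (n ω) j m ^ (z ω j))]
    rw [Finset.prod_coe_sort Ω (fun ω => ∏ j ∈ (z ω).support,
      hgFactor k (h ω) (n ω) j m ^ (z ω j)), ← Finset.prod_mul_distrib]
    exact Finset.prod_congr rfl fun ω _ => hval ω m
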